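/- arXiv:1310.3480 — 2 statements merged into one kernel-verified Lean document; each statement's English description precedes it below -/
import Mathlib

section
/- For any integers x, y ≥ 0, the finite-dimensional algebra B(x,y) has global dimension at most 2; that is, for all right B(x,y)-modules M and N and all integers p ≥ 3, Ext^p_{B(x,y)}(M, N) = 0. -/
/-!
For a vector space `V`, the modules `P1 V = V ⊗ e₁B` and `P2 V = V ⊗ e₂B` over `B = B(x,y)` are
projective: they represent the functors `M ↦ Hom_k(V, M e₁)` and `M ↦ Hom_k(V, M e₂)`. As every
path `β α` vanishes and there are no other relations, the radical of `e₂B` is `(e₁B) ^ x`, so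
that `rad (P2 V)` is a copy of `P1 (V ^ x)`.

If `M e₁ = 0`, then `M` is a vector space on which the arrows act by zero, and
`0 → P1 (M ^ x) → P2 M → M → 0` is a projective resolution: `M` has projective dimension at most
one (`BAlgebra.projDim_of_e1_eq_zero`). For arbitrary `M`, the natural map `P1 (M e₁) → M` is
bijective at the vertex `1`, so its kernel and cokernel are both modules of this kind. Its image
therefore has projective dimension at most two, and so does `M`, an extension of the cokernel by
the image (`BAlgebra.projDim_lt_three`).

`subsingleton_ext_of_hasProjectiveDimensionLT` transfers the vanishing of `Abelian.Ext` above the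
projective dimension to the derived functors `Ext k _ p`.
-/

/-!
Statement 0: For any integers `x, y ≥ 0`, the finite-dimensional algebra `B(x,y)` has global
dimension at most 2: for all right `B(x,y)`-modules `M` and `N` and all `p ≥ 3`,
`Ext^p_{B(x,y)}(M, N) = 0`.

`B(x,y)` is the quotient of the path algebra of the quiver with two vertices `1`, `2`,
`x` arrows `α_p : 1 → 2` and `y` arrows `β_q : 2 → 1`, by the ideal generated by the
paths `β_q α_p` (first `α_p`, then `β_q`).  We realize it as the quotient of the free
algebra on the trivial paths `e₁, e₂` and the arrows, by the corresponding relations;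
composition of paths is written from right to left, so that a product `u * v` means
"first traverse `v`, then `u`", and an arrow `α : 1 → 2` satisfies `α = e₂ * α = α * e₁`.
Right modules over a ring `A` are left modules over `Aᵐᵒᵖ`.
-/

noncomputable section

open CategoryTheory

/-- The generators of the path algebra of the quiver `Q(x,y)`: the two trivial paths
`e₁`, `e₂`, the `x` arrows `a p : 1 → 2` and the `y` arrows `b q : 2 → 1`. -/
inductive BGen (x y : ℕ) : Type
  | e1 : BGen x y
  | e2 : BGen x y
  | a (p : Fin x) : BGen x y
  | b (q : Fin y) : BGen x y

/-- The relations defining `B(x,y)` as a quotient of the free algebra on `BGen x y`: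
the path algebra relations for the quiver `Q(x,y)` together with the relations
`β_q * α_p = 0` (kill all length-two paths traversing first some `α_p`, then some `β_q`). -/
inductive BRel (k : Type) [Field k] (x y : ℕ) :
    FreeAlgebra k (BGen x y) → FreeAlgebra k (BGen x y) → Prop
  | idem1 : BRel k x y (FreeAlgebra.ι k BGen.e1 * FreeAlgebra.ι k BGen.e1)
      (FreeAlgebra.ι k BGen.e1)
  | idem2 : BRel k x y (FreeAlgebra.ι k BGen.e2 * FreeAlgebra.ι k BGen.e2)
      (FreeAlgebra.ι k BGen.e2)
  | orth12 : BRel k x y (FreeAlgebra.ι k BGen.e1 * FreeAlgebra.ι k BGen.e2) 0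
  | orth21 : BRel k x y (FreeAlgebra.ι k BGen.e2 * FreeAlgebra.ι k BGen.e1) 0
  | sum : BRel k x y (FreeAlgebra.ι k BGen.e1 + FreeAlgebra.ι k BGen.e2) 1
  | a_tgt (p : Fin x) : BRel k x y (FreeAlgebra.ι k BGen.e2 * FreeAlgebra.ι k (BGen.a p))
      (FreeAlgebra.ι k (BGen.a p))
  | a_src (p : Fin x) : BRel k x y (FreeAlgebra.ι k (BGen.a p) * FreeAlgebra.ι k BGen.e1)
      (FreeAlgebra.ι k (BGen.a p))
  | b_tgt (q : Fin y) : BRel k x y (FreeAlgebra.ι k BGen.e1 * FreeAlgebra.ι k (BGen.b q))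
      (FreeAlgebra.ι k (BGen.b q))
  | b_src (q : Fin y) : BRel k x y (FreeAlgebra.ι k (BGen.b q) * FreeAlgebra.ι k BGen.e2)
      (FreeAlgebra.ι k (BGen.b q))
  | ba (p : Fin x) (q : Fin y) :
      BRel k x y (FreeAlgebra.ι k (BGen.b q) * FreeAlgebra.ι k (BGen.a p)) 0

/-- The algebra `B(x,y)`. -/
def BAlgebra (k : Type) [Field k] (x y : ℕ) : Type := RingQuot (BRel k x y)

instance (k : Type) [Field k] (x y : ℕ) : Ring (BAlgebra k x y) :=
  inferInstanceAs (Ring (RingQuot (BRel k x y)))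

instance (k : Type) [Field k] (x y : ℕ) : Algebra k (BAlgebra k x y) :=
  inferInstanceAs (Algebra k (RingQuot (BRel k x y)))

namespace BAlgebra

variable {k : Type} [Field k] {x y : ℕ}

/-! ### Generators, and modules given by operators -/

/-- The class of a generator in `B(x,y)ᵐᵒᵖ`. Since `M` is a right module, the operator of this
element on `M` is right multiplication by the generator. -/
def gen (g : BGen x y) : (BAlgebra k x y)ᵐᵒᵖ :=
  MulOpposite.op (RingQuot.mkAlgHom k (BRel k x y) (FreeAlgebra.ι k g))

lemma gen_rel {s t : FreeAlgebra k (BGen x y)} (h : BRel k x y s t) :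
    RingQuot.mkAlgHom k (BRel k x y) s = RingQuot.mkAlgHom k (BRel k x y) t :=
  RingQuot.mkAlgHom_rel k h

section Relations

variable {M : Type} [AddCommGroup M] [Module (BAlgebra k x y)ᵐᵒᵖ M] (m : M)

lemma gen_smul_smul (g h : BGen x y) : (gen (k := k) g) • (gen (k := k) h) • m =
    (MulOpposite.op (RingQuot.mkAlgHom k (BRel k x y) (FreeAlgebra.ι k h * FreeAlgebra.ι k g)) :
      (BAlgebra k x y)ᵐᵒᵖ) • m := by
  rw [smul_smul, map_mul]
  rfl

lemma e1_e1 : (gen (k := k) (BGen.e1 : BGen x y)) • (gen (k := k) (BGen.e1 : BGen x y)) • m =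
    (gen (k := k) (BGen.e1 : BGen x y)) • m := by
  rw [gen_smul_smul, gen_rel BRel.idem1]; rfl

lemma e2_e2 : (gen (k := k) (BGen.e2 : BGen x y)) • (gen (k := k) (BGen.e2 : BGen x y)) • m =
    (gen (k := k) (BGen.e2 : BGen x y)) • m := by
  rw [gen_smul_smul, gen_rel BRel.idem2]; rfl

lemma e2_e1 : (gen (k := k) (BGen.e2 : BGen x y)) • (gen (k := k) (BGen.e1 : BGen x y)) • m
    = 0 := by
  rw [gen_smul_smul, gen_rel BRel.orth12, map_zero]; exact zero_smul _ m

lemma e1_e2 : (gen (k := k) (BGen.e1 : BGen x y)) • (gen (k := k) (BGen.e2 : BGen x y)) • m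
    = 0 := by
  rw [gen_smul_smul, gen_rel BRel.orth21, map_zero]; exact zero_smul _ m

lemma e1_add_e2 : (gen (k := k) (BGen.e1 : BGen x y)) • m + (gen (k := k) (BGen.e2 : BGen x y)) • m
    = m := by
  have h := gen_rel (k := k) (x := x) (y := y) BRel.sum
  rw [map_add, map_one] at h
  have h' : gen (k := k) (BGen.e1 : BGen x y) + gen (k := k) (BGen.e2 : BGen x y) = 1 :=
    congrArg MulOpposite.op h
  rw [← add_smul, h', one_smul]

lemma a_e2 (p : Fin x) : (gen (k := k) (BGen.a p : BGen x y)) •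
    (gen (k := k) (BGen.e2 : BGen x y)) • m = (gen (k := k) (BGen.a p : BGen x y)) • m := by
  rw [gen_smul_smul, gen_rel (BRel.a_tgt p)]; rfl

lemma e1_a (p : Fin x) : (gen (k := k) (BGen.e1 : BGen x y)) •
    (gen (k := k) (BGen.a p : BGen x y)) • m = (gen (k := k) (BGen.a p : BGen x y)) • m := by
  rw [gen_smul_smul, gen_rel (BRel.a_src p)]; rfl

lemma b_e1 (q : Fin y) : (gen (k := k) (BGen.b q : BGen x y)) •
    (gen (k := k) (BGen.e1 : BGen x y)) • m = (gen (k := k) (BGen.b q : BGen x y)) • m := by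
  rw [gen_smul_smul, gen_rel (BRel.b_tgt q)]; rfl

lemma e2_b (q : Fin y) : (gen (k := k) (BGen.e2 : BGen x y)) •
    (gen (k := k) (BGen.b q : BGen x y)) • m = (gen (k := k) (BGen.b q : BGen x y)) • m := by
  rw [gen_smul_smul, gen_rel (BRel.b_src q)]; rfl

lemma a_b (p : Fin x) (q : Fin y) : (gen (k := k) (BGen.a p : BGen x y)) •
    (gen (k := k) (BGen.b q : BGen x y)) • m = 0 := by
  rw [gen_smul_smul, gen_rel (BRel.ba p q), map_zero]; exact zero_smul _ m

lemma a_e1 (p : Fin x) : (gen (k := k) (BGen.a p : BGen x y)) •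
    (gen (k := k) (BGen.e1 : BGen x y)) • m = 0 := by
  rw [← a_e2, e2_e1, smul_zero]

lemma e2_a (p : Fin x) : (gen (k := k) (BGen.e2 : BGen x y)) •
    (gen (k := k) (BGen.a p : BGen x y)) • m = 0 := by
  rw [← e1_a, e2_e1]

lemma b_e2 (q : Fin y) : (gen (k := k) (BGen.b q : BGen x y)) •
    (gen (k := k) (BGen.e2 : BGen x y)) • m = 0 := by
  rw [← b_e1, e1_e2, smul_zero]

lemma e1_b (q : Fin y) : (gen (k := k) (BGen.e1 : BGen x y)) •
    (gen (k := k) (BGen.b q : BGen x y)) • m = 0 := by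
  rw [← e2_b, e1_e2]

lemma b_b (q q' : Fin y) : (gen (k := k) (BGen.b q : BGen x y)) •
    (gen (k := k) (BGen.b q' : BGen x y)) • m = 0 := by
  rw [← b_e1, e1_b, smul_zero]

end Relations

/-- A `k`-linear map commuting with the generators is `B(x,y)`-linear. -/
def linearOfGen {M N : Type} [AddCommGroup M] [AddCommGroup N] [Module k M] [Module k N]
    [Module (BAlgebra k x y)ᵐᵒᵖ M] [Module (BAlgebra k x y)ᵐᵒᵖ N]
    [IsScalarTower k (BAlgebra k x y)ᵐᵒᵖ M] [IsScalarTower k (BAlgebra k x y)ᵐᵒᵖ N]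
    (f : M →ₗ[k] N)
    (hf : ∀ (g : BGen x y) (m : M), f ((gen (k := k) g) • m) = (gen (k := k) g) • f m) :
    M →ₗ[(BAlgebra k x y)ᵐᵒᵖ] N where
  toFun := f
  map_add' := f.map_add
  map_smul' r m := by
    obtain ⟨s, hs⟩ := RingQuot.mkAlgHom_surjective k (BRel k x y) r.unop
    obtain rfl : r = MulOpposite.op (RingQuot.mkAlgHom k (BRel k x y) s : BAlgebra k x y) :=
      congrArg MulOpposite.op hs.symm
    clear hs
    change f ((MulOpposite.op (RingQuot.mkAlgHom k (BRel k x y) s) : (BAlgebra k x y)ᵐᵒᵖ) • m) =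
      (MulOpposite.op (RingQuot.mkAlgHom k (BRel k x y) s) : (BAlgebra k x y)ᵐᵒᵖ) • f m
    induction s using FreeAlgebra.induction generalizing m with
    | grade0 c =>
      rw [AlgHom.commutes]
      have h : ∀ {L : Type} [AddCommGroup L] [Module k L] [Module (BAlgebra k x y)ᵐᵒᵖ L]
          [IsScalarTower k (BAlgebra k x y)ᵐᵒᵖ L] (l : L),
          (MulOpposite.op (algebraMap k (BAlgebra k x y) c) : (BAlgebra k x y)ᵐᵒᵖ) • l = c • l :=
        fun l => algebraMap_smul (BAlgebra k x y)ᵐᵒᵖ c l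
      exact ((congrArg f (h m)).trans (f.map_smul c m)).trans (h (f m)).symm
    | grade1 g => exact hf g m
    | mul s t hs ht =>
      have h : (MulOpposite.op (RingQuot.mkAlgHom k (BRel k x y) (s * t)) : (BAlgebra k x y)ᵐᵒᵖ) =
          (MulOpposite.op (RingQuot.mkAlgHom k (BRel k x y) t) : (BAlgebra k x y)ᵐᵒᵖ) *
          (MulOpposite.op (RingQuot.mkAlgHom k (BRel k x y) s) : (BAlgebra k x y)ᵐᵒᵖ) := by
        rw [map_mul]; rfl
      rw [h, mul_smul, mul_smul, ht, hs]
    | add s t hs ht =>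
      have h : (MulOpposite.op (RingQuot.mkAlgHom k (BRel k x y) (s + t)) : (BAlgebra k x y)ᵐᵒᵖ) =
          (MulOpposite.op (RingQuot.mkAlgHom k (BRel k x y) s) : (BAlgebra k x y)ᵐᵒᵖ) +
          (MulOpposite.op (RingQuot.mkAlgHom k (BRel k x y) t) : (BAlgebra k x y)ᵐᵒᵖ) := by
        rw [map_add]; rfl
      rw [h, add_smul, add_smul, map_add, hs, ht]

@[simp] lemma linearOfGen_apply {M N : Type} [AddCommGroup M] [AddCommGroup N] [Module k M]
    [Module k N] [Module (BAlgebra k x y)ᵐᵒᵖ M] [Module (BAlgebra k x y)ᵐᵒᵖ N]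
    [IsScalarTower k (BAlgebra k x y)ᵐᵒᵖ M] [IsScalarTower k (BAlgebra k x y)ᵐᵒᵖ N]
    (f : M →ₗ[k] N)
    (hf : ∀ (g : BGen x y) (m : M), f ((gen (k := k) g) • m) = (gen (k := k) g) • f m) (m : M) :
    linearOfGen f hf m = f m := rfl

/-- The action of `B(x,y)ᵐᵒᵖ` on `W` in which the generators act by operators `r g` satisfying
the defining relations. As `W` is a right module, the product `u * v` acts by `r v * r u`. -/
def actionHom {W : Type} [AddCommGroup W] [Module k W] (r : BGen x y → Module.End k W)
    (h : ∀ ⦃s t : FreeAlgebra k (BGen x y)⦄, BRel k x y s t →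
      FreeAlgebra.lift k (fun g => MulOpposite.op (r g)) s =
        FreeAlgebra.lift k (fun g => MulOpposite.op (r g)) t) :
    (BAlgebra k x y)ᵐᵒᵖ →ₐ[k] Module.End k W :=
  AlgHom.opComm (RingQuot.liftAlgHom k ⟨FreeAlgebra.lift k (fun g => MulOpposite.op (r g)), h⟩ :
    RingQuot (BRel k x y) →ₐ[k] (Module.End k W)ᵐᵒᵖ)

lemma actionHom_gen {W : Type} [AddCommGroup W] [Module k W] (r : BGen x y → Module.End k W)
    (h) (g : BGen x y) : actionHom r h (gen g) = r g := by
  have : (RingQuot.liftAlgHom k ⟨FreeAlgebra.lift k (fun g => MulOpposite.op (r g)), h⟩ :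
    RingQuot (BRel k x y) →ₐ[k] (Module.End k W)ᵐᵒᵖ)
      (RingQuot.mkAlgHom k (BRel k x y) (FreeAlgebra.ι k g)) = MulOpposite.op (r g) := by
    rw [RingQuot.liftAlgHom_mkAlgHom_apply, FreeAlgebra.lift_ι_apply]
  exact congrArg MulOpposite.unop this

/-! ### The modules freely generated by a vector space at a vertex -/

section Free

/-- The `B(x,y)`-module freely generated by a vector space `V` at the vertex `1`, namely
`V ⊗ e₁B(x,y)`: the pair `(v, w)` stands for `v ⊗ e₁ + ∑ w q ⊗ β_q`. -/
def P1 (_k : Type) (_x y : ℕ) (V : Type) : Type := V × (Fin y → V)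

/-- The `B(x,y)`-module freely generated by a vector space `V` at the vertex `2`, namely
`V ⊗ e₂B(x,y)`: the triple `(v, u, w)` stands for
`v ⊗ e₂ + ∑ u p ⊗ α_p + ∑ w q p ⊗ α_p β_q`. The pairs `(u, w)` form its radical, a copy of
the module `P1` on `Fin x → V`. -/
def P2 (k : Type) (x y : ℕ) (V : Type) : Type := V × P1 k x y (Fin x → V)

variable (k x y) (V : Type) [AddCommGroup V] [Module k V]

instance : AddCommGroup (P1 k x y V) := inferInstanceAs (AddCommGroup (V × (Fin y → V)))

instance : Module k (P1 k x y V) := inferInstanceAs (Module k (V × (Fin y → V)))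

/-- The action of the generators on the product underlying `P1`. -/
def P1.actAux : BGen x y → Module.End k (V × (Fin y → V))
  | .e1 => LinearMap.prod (LinearMap.fst k _ _) 0
  | .e2 => LinearMap.prod 0 (LinearMap.snd k _ _)
  | .a _ => 0
  | .b q => LinearMap.prod 0 (LinearMap.single k (fun _ => V) q ∘ₗ LinearMap.fst k _ _)

/-- The action of `B(x,y)ᵐᵒᵖ` on `P1`. -/
def P1.hom : (BAlgebra k x y)ᵐᵒᵖ →ₐ[k] Module.End k (V × (Fin y → V)) :=
  actionHom (P1.actAux k x y V) (by
    intro s t h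
    cases h <;> simp only [map_mul, map_add, map_zero, map_one, FreeAlgebra.lift_ι_apply] <;>
      apply MulOpposite.unop_injective <;> refine LinearMap.ext fun m => ?_ <;> simp [P1.actAux])

instance : Module (BAlgebra k x y)ᵐᵒᵖ (P1 k x y V) :=
  Module.compHom (V × (Fin y → V)) (P1.hom k x y V).toRingHom

instance : IsScalarTower k (BAlgebra k x y)ᵐᵒᵖ (P1 k x y V) where
  smul_assoc c r m := LinearMap.congr_fun (map_smul (P1.hom k x y V) c r) m

/-- The action of the generators on `P1`. -/
def P1.act (g : BGen x y) : Module.End k (P1 k x y V) := P1.actAux k x y V g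

lemma P1.gen_smul (g : BGen x y) (m : P1 k x y V) :
    (gen (k := k) g) • m = P1.act k x y V g m :=
  LinearMap.congr_fun (actionHom_gen _ _ g) m

instance : AddCommGroup (P2 k x y V) := inferInstanceAs (AddCommGroup (V × _))

instance : Module k (P2 k x y V) := inferInstanceAs (Module k (V × _))

/-- The action of the generators on the product underlying `P2`. -/
def P2.actAux : BGen x y → Module.End k (V × ((Fin x → V) × (Fin y → Fin x → V)))
  | .e1 => LinearMap.prod 0 (P1.actAux k x y (Fin x → V) .e1 ∘ₗ LinearMap.snd k _ _)
  | .e2 => LinearMap.prod (LinearMap.fst k _ _)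
      (P1.actAux k x y (Fin x → V) .e2 ∘ₗ LinearMap.snd k _ _)
  | .a p => LinearMap.prod 0
      (LinearMap.prod (LinearMap.single k (fun _ => V) p ∘ₗ LinearMap.fst k _ _) 0)
  | .b q => LinearMap.prod 0 (P1.actAux k x y (Fin x → V) (.b q) ∘ₗ LinearMap.snd k _ _)

/-- The action of `B(x,y)ᵐᵒᵖ` on `P2`. -/
def P2.hom : (BAlgebra k x y)ᵐᵒᵖ →ₐ[k] Module.End k (V × ((Fin x → V) × (Fin y → Fin x → V))) :=
  actionHom (P2.actAux k x y V) (by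
    intro s t h
    cases h <;> simp only [map_mul, map_add, map_zero, map_one, FreeAlgebra.lift_ι_apply] <;>
      apply MulOpposite.unop_injective <;> refine LinearMap.ext fun m => ?_ <;>
      simp [P2.actAux, P1.actAux])

instance : Module (BAlgebra k x y)ᵐᵒᵖ (P2 k x y V) :=
  Module.compHom (V × ((Fin x → V) × (Fin y → Fin x → V))) (P2.hom k x y V).toRingHom

instance : IsScalarTower k (BAlgebra k x y)ᵐᵒᵖ (P2 k x y V) where
  smul_assoc c r m := LinearMap.congr_fun (map_smul (P2.hom k x y V) c r) m

/-- The action of the generators on `P2`. -/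
def P2.act (g : BGen x y) : Module.End k (P2 k x y V) := P2.actAux k x y V g

lemma P2.gen_smul (g : BGen x y) (m : P2 k x y V) :
    (gen (k := k) g) • m = P2.act k x y V g m :=
  LinearMap.congr_fun (actionHom_gen _ _ g) m

/-- The inclusion of the radical of `P2`. -/
def P2.inr : P1 k x y (Fin x → V) →ₗ[k] P2 k x y V := LinearMap.inr k V (P1 k x y (Fin x → V))

end Free

section Lift

variable {V M : Type} [AddCommGroup V] [Module k V] [AddCommGroup M] [Module k M]
  [Module (BAlgebra k x y)ᵐᵒᵖ M] [IsScalarTower k (BAlgebra k x y)ᵐᵒᵖ M]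

/-- The operator of `r` on a module, as a `k`-linear map. -/
abbrev op (M : Type) [AddCommGroup M] [Module k M]
    [Module (BAlgebra k x y)ᵐᵒᵖ M] [IsScalarTower k (BAlgebra k x y)ᵐᵒᵖ M]
    (r : (BAlgebra k x y)ᵐᵒᵖ) : M →ₗ[k] M := Algebra.lsmul k k M r

/-- The `k`-linear map underlying `P1.lift`. -/
def P1.liftAux (f : V →ₗ[k] M) : P1 k x y V →ₗ[k] M :=
  (LinearMap.coprod f (∑ q, op M (gen (x := x) (.b q)) ∘ₗ f ∘ₗ LinearMap.proj q) :
    V × (Fin y → V) →ₗ[k] M)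

lemma P1.liftAux_apply (f : V →ₗ[k] M) (m : P1 k x y V) :
    P1.liftAux f m = f m.1 + ∑ q, (gen (k := k) (.b q : BGen x y)) • f (m.2 q) := by
  refine (LinearMap.coprod_apply _ _ _).trans ?_
  simp

/-- The universal property of `P1`: a linear map from `V` to `M e₁` extends to a module map. -/
def P1.lift (f : V →ₗ[k] M) (hf : ∀ v, (gen (k := k) (.e1 : BGen x y)) • f v = f v) :
    P1 k x y V →ₗ[(BAlgebra k x y)ᵐᵒᵖ] M :=
  linearOfGen (P1.liftAux f) (by
    intro g m
    rw [P1.gen_smul, P1.liftAux_apply, P1.liftAux_apply, smul_add, Finset.smul_sum]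
    rcases g with _ | _ | p | q
    · change f m.1 + ∑ q, (gen (k := k) (.b q : BGen x y)) • f 0 = _
      simp [e1_b, hf]
    · change f 0 + ∑ q, (gen (k := k) (.b q : BGen x y)) • f (m.2 q) = _
      rw [← hf m.1]
      simp [e2_b, e2_e1]
    · change f 0 + ∑ q, (gen (k := k) (.b q : BGen x y)) • f 0 = _
      rw [← hf m.1]
      simp [a_b, a_e1]
    · change f 0 + ∑ q', (gen (k := k) (.b q' : BGen x y)) •
        f ((Pi.single q m.1 : Fin y → V) q') = _
      simp only [b_b]
      rw [Finset.sum_eq_single q]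
      · simp
      · intro q' _ h
        simp [h]
      · simp)

lemma P1.lift_apply (f : V →ₗ[k] M) (hf) (m : P1 k x y V) :
    P1.lift f hf m = f m.1 + ∑ q, (gen (k := k) (.b q : BGen x y)) • f (m.2 q) :=
  P1.liftAux_apply f m

/-- The map sending `u` to `∑ f (u p) α_p`, through which `P2.lift` acts on the radical. -/
def P2.liftA (f : V →ₗ[k] M) : (Fin x → V) →ₗ[k] M :=
  ∑ p, op M (gen (y := y) (.a p)) ∘ₗ f ∘ₗ LinearMap.proj p

lemma P2.liftA_apply (f : V →ₗ[k] M) (u : Fin x → V) :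
    P2.liftA (y := y) f u = ∑ p, (gen (k := k) (.a p : BGen x y)) • f (u p) := by
  simp [P2.liftA]

lemma P2.e1_liftA (f : V →ₗ[k] M) (u : Fin x → V) :
    (gen (k := k) (.e1 : BGen x y)) • P2.liftA (y := y) f u = P2.liftA (y := y) f u := by
  simp [P2.liftA_apply, Finset.smul_sum, e1_a]

/-- The `k`-linear map underlying `P2.lift`. -/
def P2.liftAux (f : V →ₗ[k] M) : P2 k x y V →ₗ[k] M :=
  (LinearMap.coprod f ((P1.lift (P2.liftA f) (P2.e1_liftA f)).restrictScalars k) :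
    V × P1 k x y (Fin x → V) →ₗ[k] M)

lemma P2.liftAux_apply (f : V →ₗ[k] M) (m : P2 k x y V) :
    P2.liftAux f m = f m.1 + P1.lift (P2.liftA f) (P2.e1_liftA f) m.2 := rfl

/-- The universal property of `P2`: a linear map from `V` to `M e₂` extends to a module map. -/
def P2.lift (f : V →ₗ[k] M) (hf : ∀ v, (gen (k := k) (.e2 : BGen x y)) • f v = f v) :
    P2 k x y V →ₗ[(BAlgebra k x y)ᵐᵒᵖ] M :=
  linearOfGen (P2.liftAux f) (by
    intro g m
    rw [P2.gen_smul, P2.liftAux_apply, P2.liftAux_apply, smul_add,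
      ← map_smul (P1.lift _ _), P1.gen_smul]
    rcases g with _ | _ | p | q
    · change f 0 + P1.lift (P2.liftA f) (P2.e1_liftA f) (P1.act k x y _ .e1 m.2) = _
      rw [← hf m.1, e1_e2, map_zero]
    · change f m.1 + P1.lift (P2.liftA f) (P2.e1_liftA f) (P1.act k x y _ .e2 m.2) = _
      rw [hf]
    · have h : P1.lift (P2.liftA f) (P2.e1_liftA f)
          ((Pi.single p m.1, 0) : (Fin x → V) × (Fin y → Fin x → V)) =
          (gen (k := k) (.a p : BGen x y)) • f m.1 := by
        refine (P1.lift_apply (P2.liftA f) (P2.e1_liftA f) _).trans ?_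
        change P2.liftA (y := y) f (Pi.single p m.1) +
          ∑ q, (gen (k := k) (.b q : BGen x y)) • P2.liftA (y := y) f 0 = _
        rw [P2.liftA_apply, Finset.sum_eq_single p]
        · simp
        · intro p' _ h
          simp [h]
        · simp
      change f 0 + P1.lift (P2.liftA f) (P2.e1_liftA f)
        ((Pi.single p m.1, 0) : (Fin x → V) × (Fin y → Fin x → V)) =
          _ + P1.lift (P2.liftA f) (P2.e1_liftA f) 0
      rw [h, map_zero, map_zero, zero_add, add_zero]
    · change f 0 + P1.lift (P2.liftA f) (P2.e1_liftA f) (P1.act k x y _ (.b q) m.2) = _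
      rw [← hf m.1, b_e2, map_zero])

lemma P2.lift_apply (f : V →ₗ[k] M) (hf) (m : P2 k x y V) :
    P2.lift f hf m = f m.1 + P1.lift (P2.liftA f) (P2.e1_liftA f) m.2 := rfl

end Lift

/-! ### Projectivity and projective dimension -/

section Projective

variable {V M : Type} [AddCommGroup V] [Module k V] [AddCommGroup M] [Module k M]
  [Module (BAlgebra k x y)ᵐᵒᵖ M] [IsScalarTower k (BAlgebra k x y)ᵐᵒᵖ M]

lemma P1.exists_section (f : M →ₗ[(BAlgebra k x y)ᵐᵒᵖ] P1 k x y V) (hf : Function.Surjective f) :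
    ∃ h : P1 k x y V →ₗ[(BAlgebra k x y)ᵐᵒᵖ] M, f.comp h = .id := by
  obtain ⟨s, hs⟩ := (f.restrictScalars k).exists_rightInverse_of_surjective
    (LinearMap.range_eq_top.2 hf)
  have hs' : ∀ m, f (s m) = m := fun m => LinearMap.congr_fun hs m
  let ι : V →ₗ[k] P1 k x y V := LinearMap.inl k V (Fin y → V)
  have e1_ι : ∀ v, (gen (k := k) (.e1 : BGen x y)) • ι v = ι v := fun v => by
    rw [P1.gen_smul]; rfl
  let g : V →ₗ[k] M := op _ (gen (.e1 : BGen x y)) ∘ₗ s ∘ₗ ι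
  have hg : ∀ v, (gen (k := k) (.e1 : BGen x y)) • g v = g v := fun v => e1_e1 (s (ι v))
  refine ⟨P1.lift g hg, LinearMap.ext fun m => ?_⟩
  have h : ∀ v, f (g v) = ι v := fun v => by
    change f ((gen (k := k) (.e1 : BGen x y)) • s (ι v)) = _
    rw [map_smul, hs', e1_ι]
  rw [LinearMap.comp_apply, P1.lift_apply, map_add, map_sum, h]
  simp only [map_smul, h, P1.gen_smul, LinearMap.id_apply]
  let κ : (Fin y → V) →ₗ[k] P1 k x y V := LinearMap.inr k V (Fin y → V)
  have hb : ∀ q, P1.act k x y V (.b q) (ι (m.2 q)) = κ (Pi.single q (m.2 q)) := fun q => rfl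
  simp only [hb]
  rw [← map_sum, Finset.univ_sum_single]
  exact Prod.fst_add_snd m

lemma P2.exists_section (f : M →ₗ[(BAlgebra k x y)ᵐᵒᵖ] P2 k x y V) (hf : Function.Surjective f) :
    ∃ h : P2 k x y V →ₗ[(BAlgebra k x y)ᵐᵒᵖ] M, f.comp h = .id := by
  obtain ⟨s, hs⟩ := (f.restrictScalars k).exists_rightInverse_of_surjective
    (LinearMap.range_eq_top.2 hf)
  have hs' : ∀ m, f (s m) = m := fun m => LinearMap.congr_fun hs m
  let ι : V →ₗ[k] P2 k x y V := LinearMap.inl k V (P1 k x y (Fin x → V))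
  have e2_ι : ∀ v, (gen (k := k) (.e2 : BGen x y)) • ι v = ι v := fun v => by
    rw [P2.gen_smul]; rfl
  let g : V →ₗ[k] M := op _ (gen (.e2 : BGen x y)) ∘ₗ s ∘ₗ ι
  have hg : ∀ v, (gen (k := k) (.e2 : BGen x y)) • g v = g v := fun v => e2_e2 (s (ι v))
  refine ⟨P2.lift g hg, LinearMap.ext fun m => ?_⟩
  have h : ∀ v, f (g v) = ι v := fun v => by
    change f ((gen (k := k) (.e2 : BGen x y)) • s (ι v)) = _
    rw [map_smul, hs', e2_ι]
  let ρ := P2.inr k x y V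
  let ι' : (Fin x → V) →ₗ[k] P1 k x y (Fin x → V) := LinearMap.inl k _ (Fin y → Fin x → V)
  let κ : (Fin y → Fin x → V) →ₗ[k] P1 k x y (Fin x → V) := LinearMap.inr k (Fin x → V) _
  have ha : ∀ u, f (P2.liftA (y := y) g u) = ρ (ι' u) := fun u => by
    have hp : ∀ p, P2.act k x y V (.a p) (ι (u p)) = ρ (ι' (Pi.single p (u p))) := fun p => rfl
    rw [P2.liftA_apply, map_sum]
    simp only [map_smul, h, P2.gen_smul, hp]
    rw [← map_sum, ← map_sum, Finset.univ_sum_single]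
  have hb : ∀ q u, P2.act k x y V (.b q) (ρ (ι' u)) = ρ (κ (Pi.single q u)) := fun q u => rfl
  rw [LinearMap.comp_apply, P2.lift_apply, P1.lift_apply, map_add, map_add, map_sum, h, ha]
  simp only [map_smul, ha, P2.gen_smul, LinearMap.id_apply, hb]
  rw [← map_sum, ← map_sum, Finset.univ_sum_single, ← map_add]
  exact (congrArg (fun z => ι m.1 + ρ z) (Prod.fst_add_snd m.2)).trans (Prod.fst_add_snd m)

instance : Module.Projective (BAlgebra k x y)ᵐᵒᵖ (P1 k x y V) :=
  Module.Projective.of_lifting_property'' P1.exists_section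

instance : Module.Projective (BAlgebra k x y)ᵐᵒᵖ (P2 k x y V) :=
  Module.Projective.of_lifting_property'' P2.exists_section

end Projective

section Dimension

lemma hasProjectiveDimensionLT_one (P : Type) [AddCommGroup P] [Module (BAlgebra k x y)ᵐᵒᵖ P]
    [Module.Projective (BAlgebra k x y)ᵐᵒᵖ P] :
    HasProjectiveDimensionLT (ModuleCat.of (BAlgebra k x y)ᵐᵒᵖ P) 1 :=
  projective_iff_hasProjectiveDimensionLT_one.1 ((IsProjective.iff_projective P).1 inferInstance)

variable {M : Type} [AddCommGroup M] [Module k M]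
  [Module (BAlgebra k x y)ᵐᵒᵖ M] [IsScalarTower k (BAlgebra k x y)ᵐᵒᵖ M]

/-- If `M e₁ = 0`, then `0 → P1 (M ^ x) → P2 M → M → 0` is a projective resolution, so `M` has
projective dimension at most one. -/
lemma projDim_of_e1_eq_zero (hM : ∀ m : M, (gen (k := k) (.e1 : BGen x y)) • m = 0) :
    HasProjectiveDimensionLT (ModuleCat.of (BAlgebra k x y)ᵐᵒᵖ M) 2 := by
  have he2 : ∀ m : M, (gen (k := k) (.e2 : BGen x y)) • m = m := fun m => by
    simpa [hM] using e1_add_e2 (k := k) (x := x) (y := y) m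
  let i : P1 k x y (Fin x → M) →ₗ[(BAlgebra k x y)ᵐᵒᵖ] P2 k x y M :=
    linearOfGen (P2.inr k x y M) (by
      intro g m
      rw [P1.gen_smul, P2.gen_smul]
      rcases g with _ | _ | p | q
      · rfl
      · rfl
      · refine Prod.ext rfl (Prod.ext ?_ rfl)
        exact (Pi.single_zero p).symm
      · rfl)
  let π : P2 k x y M →ₗ[(BAlgebra k x y)ᵐᵒᵖ] M := P2.lift LinearMap.id he2
  have hπ : ∀ m, π m = m.1 := fun m => by
    have ha : ∀ u, P2.liftA (x := x) (y := y) (LinearMap.id : M →ₗ[k] M) u = 0 := fun u => by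
      rw [← P2.e1_liftA, hM]
    rw [P2.lift_apply, P1.lift_apply]
    simp [ha]
  have hS : (ModuleCat.shortComplexOfCompEqZero i π
      (LinearMap.ext fun m => hπ (i m))).ShortExact := by
    refine ModuleCat.shortComplex_shortExact _ (fun m => ⟨fun h => ?_, ?_⟩) ?_ fun m => ?_
    · exact ⟨m.2, Prod.ext ((hπ m).symm.trans h).symm rfl⟩
    · rintro ⟨m, rfl⟩
      exact hπ (i m)
    · exact fun m m' h => congrArg Prod.snd h
    · exact ⟨((m, 0) : M × P1 k x y (Fin x → M)), hπ _⟩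
  refine hS.hasProjectiveDimensionLT_X₃ 1 ?_ ?_
  · exact hasProjectiveDimensionLT_one (P1 k x y (Fin x → M))
  · have := hasProjectiveDimensionLT_one (k := k) (x := x) (y := y) (P2 k x y M)
    exact hasProjectiveDimensionLT_of_ge
        (ModuleCat.of (BAlgebra k x y)ᵐᵒᵖ (P2 k x y M)) 1 2 (by norm_num)

/-- The image `I` of `P1 (M e₁) → M` is the submodule generated by `M e₁`. The kernel and the
cokernel of this map vanish at the vertex `1`, so `I` has projective dimension at most two and
`M / I` at most one. -/
lemma projDim_lt_three :
    HasProjectiveDimensionLT (ModuleCat.of (BAlgebra k x y)ᵐᵒᵖ M) 3 := by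
  let V : Submodule k M := LinearMap.range (op M (gen (k := k) (.e1 : BGen x y)))
  have hV : ∀ v : V, (gen (k := k) (.e1 : BGen x y)) • V.subtype v = V.subtype v := by
    rintro ⟨_, m, rfl⟩
    exact e1_e1 m
  let F : P1 k x y V →ₗ[(BAlgebra k x y)ᵐᵒᵖ] M := P1.lift V.subtype hV
  have hF : ∀ z, F z = z.1 + ∑ q, (gen (k := k) (.b q : BGen x y)) • (z.2 q : M) :=
    P1.lift_apply V.subtype hV
  have hK : HasProjectiveDimensionLT
      (ModuleCat.of (BAlgebra k x y)ᵐᵒᵖ (LinearMap.ker F)) 2 := by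
    refine projDim_of_e1_eq_zero fun z => Subtype.ext ?_
    obtain ⟨z, hz⟩ := z
    have h1 : (gen (k := k) (.e1 : BGen x y)) • F z = z.1 := by
      rw [hF, smul_add, Finset.smul_sum]
      simp only [e1_b, Finset.sum_const_zero, add_zero]
      exact hV z.1
    rw [LinearMap.mem_ker.1 hz, smul_zero] at h1
    change (gen (k := k) (.e1 : BGen x y)) • z = 0
    rw [P1.gen_smul]
    exact Prod.ext (Subtype.ext h1.symm) rfl
  have hI : HasProjectiveDimensionLT
      (ModuleCat.of (BAlgebra k x y)ᵐᵒᵖ (LinearMap.range F)) 3 := by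
    have hS : F.rangeRestrict.shortComplexKer.ShortExact :=
      LinearMap.shortExact_shortComplexKer F.surjective_rangeRestrict
    refine hS.hasProjectiveDimensionLT_X₃ 2 ?_ ?_
    · change HasProjectiveDimensionLT
        (ModuleCat.of (BAlgebra k x y)ᵐᵒᵖ (LinearMap.ker F.rangeRestrict)) 2
      rwa [LinearMap.ker_rangeRestrict]
    · have := hasProjectiveDimensionLT_one (k := k) (x := x) (y := y) (P1 k x y V)
      exact hasProjectiveDimensionLT_of_ge
        (ModuleCat.of (BAlgebra k x y)ᵐᵒᵖ (P1 k x y V)) 1 3 (by norm_num)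
  have hC : HasProjectiveDimensionLT
      (ModuleCat.of (BAlgebra k x y)ᵐᵒᵖ (M ⧸ LinearMap.range F)) 2 := by
    refine projDim_of_e1_eq_zero fun z => ?_
    obtain ⟨m, rfl⟩ := Submodule.Quotient.mk_surjective _ z
    rw [← Submodule.Quotient.mk_smul, Submodule.Quotient.mk_eq_zero]
    refine ⟨((⟨_, m, rfl⟩, 0) : V × (Fin y → V)), (hF _).trans ?_⟩
    change (gen (k := k) (.e1 : BGen x y)) • m +
      ∑ q, (gen (k := k) (.b q : BGen x y)) • V.subtype 0 = _
    simp
  have hS : (ModuleCat.shortComplexOfCompEqZero (LinearMap.range F).subtype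
      (LinearMap.range F).mkQ (by ext; simp)).ShortExact :=
    ModuleCat.shortComplex_shortExact _ (LinearMap.exact_subtype_mkQ _)
      (Submodule.subtype_injective _) (Submodule.mkQ_surjective _)
  exact hS.hasProjectiveDimensionLT_X₂ 3 hI (hasProjectiveDimensionLT_of_ge _ 2 3 (by norm_num))

end Dimension

end BAlgebra

/-! ### Comparison of the two Ext functors -/

/-- The Ext modules defined as derived functors vanish above the projective dimension, which
is defined through the Ext groups of the derived category: in both cases a class of degree
`p` is a cocycle on a projective resolution. -/
lemma subsingleton_ext_of_hasProjectiveDimensionLT {R : Type*} [Ring R] {C : Type*} [Category* C]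
    [Abelian C] [Linear R C] [EnoughProjectives C] (X Y : C) (n p : ℕ) (hp : n + 1 ≤ p)
    [HasProjectiveDimensionLT X (n + 1)] :
    Subsingleton (((Ext R C p).obj (Opposite.op X)).obj Y) := by
  let P := ProjectiveResolution.of X
  obtain ⟨p, rfl⟩ : ∃ q, p = q + 1 := ⟨p - 1, by omega⟩
  rw [← ModuleCat.isZero_iff_subsingleton]
  refine Limits.IsZero.of_iso ?_ (P.isoExt (R := R) (p + 1) Y)
  rw [← HomologicalComplex.exactAt_iff_isZero_homology,
    HomologicalComplex.exactAt_iff' _ p (p + 1) (p + 2) (by simp) (by simp),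
    ShortComplex.moduleCat_exact_iff]
  intro f hf
  let := HasExt.standard C
  exact (P.extMk_eq_zero_iff f (p + 2) rfl hf p rfl).1
    (Abelian.Ext.eq_zero_of_hasProjectiveDimensionLT _ (n + 1) hp)

/-- `B(x,y)` has global dimension at most `2`:
`Ext^p_{B(x,y)}(M, N) = 0` for all right `B(x,y)`-modules `M`, `N` and all `p ≥ 3`. -/
theorem BAlgebra_globalDimension_le_two (k : Type) [Field k] (x y : ℕ)
    (M N : ModuleCat (BAlgebra k x y)ᵐᵒᵖ) (p : ℕ) (hp : 3 ≤ p) :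
    Subsingleton (((Ext k (ModuleCat (BAlgebra k x y)ᵐᵒᵖ) p).obj (Opposite.op M)).obj N) := by
  let := Module.compHom M (algebraMap k (BAlgebra k x y)ᵐᵒᵖ)
  have : IsScalarTower k (BAlgebra k x y)ᵐᵒᵖ M :=
    ⟨fun c r m => by rw [Algebra.smul_def, mul_smul]; rfl⟩
  have : HasProjectiveDimensionLT M (2 + 1) := BAlgebra.projDim_lt_three (M := M)
  exact subsingleton_ext_of_hasProjectiveDimensionLT M N 2 p hp

end
end

section
/- For any integers x, y ≥ 0, the chain of ideals 0 ⊆ B(x,y)e₁B(x,y) ⊆ B(x,y) is a heredity chain: the ring e₁B(x,y)e₁ is semisimple (isomorphic to k), the ideal B(x,y)e₁B(x,y) is projective as a right B(x,y)-module, and the quotient ring B(x,y)/B(x,y)e₁B(x,y) is semisimple (isomorphic to k). In particular, B(x,y) is a quasi-hereditary algebra. -/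
/-!
The nonzero paths of `B = B(x,y)` are `e₁`, `e₂`, `αₚ`, `β_q` and `αₚ β_q` (composition order), and
they form a basis. To see that they are linearly independent, multiplication is written out in
coordinates on the model `BModel`, which is checked to be an algebra. The presentation gives a map
`B → BModel`, and evaluating coordinates gives a linear map back; the latter intertwines left
multiplication by generators (`ofModel_gen_mul`), so the two maps are mutually inverse
(`modelEquiv`).

In coordinates everything is visible. The ideal `B e₁ B` is the set of elements with vanishing
`e₂`-coefficient, hence `B / B e₁ B ≅ k` (`quotient_model`). The corner `e₁ B e₁` is `k e₁` because
the only other candidates `β_q αₚ` vanish (`corner_model`). Finally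
`B e₁ B = e₁B ⊕ ⨁ₚ αₚB` as right modules, and left multiplication by `αₚ` is an isomorphism
`e₁B ≅ αₚB`, so `B e₁ B` is projective (`projective_model`).

These facts are proved for every ring identified with the model with `e` corresponding to `e₁`, so
that they apply to both `B` and `B / 0`; the latter occurs in the definition of quasi-heredity.
-/

/-!
Statement 1: the chain `0 ⊆ B(x,y)e₁B(x,y) ⊆ B(x,y)` is a heredity chain:
`e₁B(x,y)e₁` is semisimple (isomorphic to `k`), `B(x,y)e₁B(x,y)` is projective as a
right `B(x,y)`-module, and `B(x,y)/B(x,y)e₁B(x,y)` is semisimple (isomorphic to `k`).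
In particular `B(x,y)` is quasi-hereditary.
-/

noncomputable section

universe u

section QuasiHereditaryDefs

variable {A : Type u} [Ring A]

/-- The corner `eAe` of a ring `A` at an element `e`, as a non-unital subring:
it consists of all `z` with `e * z = z = z * e`. -/
def cornerNonUnitalSubring (e : A) : NonUnitalSubring A where
  carrier := {z | e * z = z ∧ z * e = z}
  add_mem' := by
    rintro a b ⟨ha1, ha2⟩ ⟨hb1, hb2⟩
    exact ⟨by rw [mul_add, ha1, hb1], by rw [add_mul, ha2, hb2]⟩
  zero_mem' := ⟨mul_zero e, zero_mul e⟩
  neg_mem' := by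
    rintro a ⟨h1, h2⟩
    exact ⟨by rw [mul_neg, h1], by rw [neg_mul, h2]⟩
  mul_mem' := by
    rintro a b ⟨ha1, -⟩ ⟨-, hb2⟩
    exact ⟨by rw [← mul_assoc, ha1], by rw [mul_assoc, hb2]⟩

/-- If `e` is idempotent, the corner `eAe` is a unital ring with unit `e`. -/
def cornerRing {e : A} (he : IsIdempotentElem e) : Ring (cornerNonUnitalSubring e) :=
  { (inferInstance : NonUnitalRing (cornerNonUnitalSubring e)) with
    one := ⟨e, he, he⟩
    one_mul := fun a => Subtype.ext a.2.1
    mul_one := fun a => Subtype.ext a.2.2 }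

/-- A two-sided ideal of `A`, regarded as a submodule of the right regular `A`-module
(i.e. as a left module over `Aᵐᵒᵖ`). -/
def TwoSidedIdeal.rightSubmodule (J : TwoSidedIdeal A) : Submodule Aᵐᵒᵖ A where
  carrier := J
  add_mem' := J.add_mem
  zero_mem' := J.zero_mem
  smul_mem' := fun c {z} hz => by
    simpa [MulOpposite.smul_eq_mul_unop] using J.mul_mem_right z c.unop hz

/-- A two-sided ideal `J` of a ring `A` is a heredity ideal if `J = AeA` for some
idempotent `e` such that the corner ring `eAe` is semisimple and `J` is projective
as a right `A`-module. -/
def IsHeredityIdeal (J : TwoSidedIdeal A) : Prop :=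
  ∃ e : A, ∃ he : IsIdempotentElem e,
    J = TwoSidedIdeal.span {e} ∧
    (letI := cornerRing he; IsSemisimpleRing (cornerNonUnitalSubring e)) ∧
    Module.Projective Aᵐᵒᵖ J.rightSubmodule

/-- A ring `A` is quasi-hereditary if there is a chain of two-sided ideals
`0 = J₀ ⊆ J₁ ⊆ ⋯ ⊆ J_m = A` such that for each `i`, the image of `J_{i+1}` in the
quotient ring `A / J_i` is a heredity ideal of `A / J_i`. -/
def IsQuasiHereditary (A : Type u) [Ring A] : Prop :=
  ∃ (m : ℕ) (J : Fin (m + 1) → TwoSidedIdeal A),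
    Monotone J ∧ J 0 = ⊥ ∧ J (Fin.last m) = ⊤ ∧
    ∀ i : Fin m,
      IsHeredityIdeal
        (TwoSidedIdeal.span ((J i.castSucc).ringCon.mk' '' (J i.succ : Set A)))

end QuasiHereditaryDefs
variable (k : Type) [Field k] (x y : ℕ)

/-- The idempotent `e₁ ∈ B(x,y)`. -/
def Be1 : BAlgebra k x y := RingQuot.mkAlgHom k (BRel k x y) (FreeAlgebra.ι k BGen.e1)

/-- The idempotent `e₂ ∈ B(x,y)`. -/
def Be2 : BAlgebra k x y := RingQuot.mkAlgHom k (BRel k x y) (FreeAlgebra.ι k BGen.e2)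

/-- The arrow `α_p ∈ B(x,y)`. -/
def Ba (p : Fin x) : BAlgebra k x y := RingQuot.mkAlgHom k (BRel k x y) (FreeAlgebra.ι k (BGen.a p))

/-- The arrow `β_q ∈ B(x,y)`. -/
def Bb (q : Fin y) : BAlgebra k x y := RingQuot.mkAlgHom k (BRel k x y) (FreeAlgebra.ι k (BGen.b q))

/-! ### The model of `B(x,y)` in coordinates -/

/-- The model of `B(x,y)` in the basis of paths: `⟨r, s, u, v, m⟩` stands for
`r e₁ + s e₂ + ∑ uₚ αₚ + ∑ v_q β_q + ∑ m_{pq} αₚ β_q`. -/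
@[ext]
structure BModel (k : Type) (x y : ℕ) : Type where
  /-- coefficient of `e₁` -/
  r : k
  /-- coefficient of `e₂` -/
  s : k
  /-- coefficients of the `αₚ` -/
  u : Fin x → k
  /-- coefficients of the `β_q` -/
  v : Fin y → k
  /-- coefficients of the `αₚ β_q` -/
  m : Fin x → Fin y → k

namespace BModel

variable {k x y}

instance : Zero (BModel k x y) := ⟨⟨0, 0, 0, 0, 0⟩⟩
instance : One (BModel k x y) := ⟨⟨1, 1, 0, 0, 0⟩⟩
instance : Add (BModel k x y) :=
  ⟨fun z w => ⟨z.r + w.r, z.s + w.s, z.u + w.u, z.v + w.v, z.m + w.m⟩⟩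
instance : Neg (BModel k x y) := ⟨fun z => ⟨-z.r, -z.s, -z.u, -z.v, -z.m⟩⟩
instance : SMul k (BModel k x y) :=
  ⟨fun c z => ⟨c * z.r, c * z.s, c • z.u, c • z.v, c • z.m⟩⟩
instance : Mul (BModel k x y) :=
  ⟨fun z w => ⟨z.r * w.r, z.s * w.s, fun p => z.s * w.u p + z.u p * w.r,
    fun q => z.r * w.v q + z.v q * w.s,
    fun p q => z.s * w.m p q + z.u p * w.v q + z.m p q * w.s⟩⟩

@[simp] lemma zero_r : (0 : BModel k x y).r = 0 := rfl
@[simp] lemma zero_s : (0 : BModel k x y).s = 0 := rfl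
@[simp] lemma zero_u : (0 : BModel k x y).u = 0 := rfl
@[simp] lemma zero_v : (0 : BModel k x y).v = 0 := rfl
@[simp] lemma zero_m : (0 : BModel k x y).m = 0 := rfl
@[simp] lemma one_r : (1 : BModel k x y).r = 1 := rfl
@[simp] lemma one_s : (1 : BModel k x y).s = 1 := rfl
@[simp] lemma one_u : (1 : BModel k x y).u = 0 := rfl
@[simp] lemma one_v : (1 : BModel k x y).v = 0 := rfl
@[simp] lemma one_m : (1 : BModel k x y).m = 0 := rfl
@[simp] lemma add_r (z w : BModel k x y) : (z + w).r = z.r + w.r := rfl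
@[simp] lemma add_s (z w : BModel k x y) : (z + w).s = z.s + w.s := rfl
@[simp] lemma add_u (z w : BModel k x y) : (z + w).u = z.u + w.u := rfl
@[simp] lemma add_v (z w : BModel k x y) : (z + w).v = z.v + w.v := rfl
@[simp] lemma add_m (z w : BModel k x y) : (z + w).m = z.m + w.m := rfl
@[simp] lemma neg_r (z : BModel k x y) : (-z).r = -z.r := rfl
@[simp] lemma neg_s (z : BModel k x y) : (-z).s = -z.s := rfl
@[simp] lemma neg_u (z : BModel k x y) : (-z).u = -z.u := rfl
@[simp] lemma neg_v (z : BModel k x y) : (-z).v = -z.v := rfl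
@[simp] lemma neg_m (z : BModel k x y) : (-z).m = -z.m := rfl
@[simp] lemma smul_r (c : k) (z : BModel k x y) : (c • z).r = c * z.r := rfl
@[simp] lemma smul_s (c : k) (z : BModel k x y) : (c • z).s = c * z.s := rfl
@[simp] lemma smul_u (c : k) (z : BModel k x y) : (c • z).u = c • z.u := rfl
@[simp] lemma smul_v (c : k) (z : BModel k x y) : (c • z).v = c • z.v := rfl
@[simp] lemma smul_m (c : k) (z : BModel k x y) : (c • z).m = c • z.m := rfl
@[simp] lemma mul_r (z w : BModel k x y) : (z * w).r = z.r * w.r := rfl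
@[simp] lemma mul_s (z w : BModel k x y) : (z * w).s = z.s * w.s := rfl
@[simp] lemma mul_u (z w : BModel k x y) (p : Fin x) :
    (z * w).u p = z.s * w.u p + z.u p * w.r := rfl
@[simp] lemma mul_v (z w : BModel k x y) (q : Fin y) :
    (z * w).v q = z.r * w.v q + z.v q * w.s := rfl
@[simp] lemma mul_m (z w : BModel k x y) (p : Fin x) (q : Fin y) :
    (z * w).m p q = z.s * w.m p q + z.u p * w.v q + z.m p q * w.s := rfl

instance : Ring (BModel k x y) where
  add_assoc _ _ _ := by ext <;> simp [add_assoc]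
  zero_add _ := by ext <;> simp
  add_zero _ := by ext <;> simp
  add_comm _ _ := by ext <;> simp [add_comm]
  neg_add_cancel _ := by ext <;> simp
  nsmul := nsmulRec
  zsmul := zsmulRec
  left_distrib _ _ _ := by ext <;> simp <;> ring
  right_distrib _ _ _ := by ext <;> simp <;> ring
  zero_mul _ := by ext <;> simp
  mul_zero _ := by ext <;> simp
  mul_assoc _ _ _ := by ext <;> simp <;> ring
  one_mul _ := by ext <;> simp
  mul_one _ := by ext <;> simp

instance : Module k (BModel k x y) where
  one_smul _ := by ext <;> simp
  mul_smul _ _ _ := by ext <;> simp [mul_assoc]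
  smul_zero _ := by ext <;> simp
  smul_add _ _ _ := by ext <;> simp [mul_add]
  add_smul _ _ _ := by ext <;> simp [add_mul]
  zero_smul _ := by ext <;> simp

instance : Algebra k (BModel k x y) :=
  Algebra.ofModule (fun _ _ _ => by ext <;> simp <;> ring)
    (fun _ _ _ => by ext <;> simp <;> ring)

@[simp] lemma sum_r {ι : Type*} (S : Finset ι) (f : ι → BModel k x y) :
    (∑ i ∈ S, f i).r = ∑ i ∈ S, (f i).r :=
  map_sum (⟨⟨r, rfl⟩, fun _ _ => rfl⟩ : BModel k x y →+ k) f S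
@[simp] lemma sum_s {ι : Type*} (S : Finset ι) (f : ι → BModel k x y) :
    (∑ i ∈ S, f i).s = ∑ i ∈ S, (f i).s :=
  map_sum (⟨⟨s, rfl⟩, fun _ _ => rfl⟩ : BModel k x y →+ k) f S
@[simp] lemma sum_u {ι : Type*} (S : Finset ι) (f : ι → BModel k x y) :
    (∑ i ∈ S, f i).u = ∑ i ∈ S, (f i).u :=
  map_sum (⟨⟨u, rfl⟩, fun _ _ => rfl⟩ : BModel k x y →+ (Fin x → k)) f S
@[simp] lemma sum_v {ι : Type*} (S : Finset ι) (f : ι → BModel k x y) :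
    (∑ i ∈ S, f i).v = ∑ i ∈ S, (f i).v :=
  map_sum (⟨⟨v, rfl⟩, fun _ _ => rfl⟩ : BModel k x y →+ (Fin y → k)) f S
@[simp] lemma sum_m {ι : Type*} (S : Finset ι) (f : ι → BModel k x y) :
    (∑ i ∈ S, f i).m = ∑ i ∈ S, (f i).m :=
  map_sum (⟨⟨m, rfl⟩, fun _ _ => rfl⟩ : BModel k x y →+ (Fin x → Fin y → k)) f S

variable (k x y) in
/-- The trivial path `e₁` in the model. -/
def e1 : BModel k x y := ⟨1, 0, 0, 0, 0⟩

/-- The arrow `αₚ` in the model. -/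
def a (p : Fin x) : BModel k x y := ⟨0, 0, Pi.single p 1, 0, 0⟩

/-- The images of the generators of `B(x,y)` in the model. -/
def gen : BGen x y → BModel k x y
  | .e1 => e1 k x y
  | .e2 => ⟨0, 1, 0, 0, 0⟩
  | .a p => a p
  | .b q => ⟨0, 0, 0, Pi.single q 1, 0⟩

variable (k x y) in
/-- The coefficient of `e₂`, a ring homomorphism whose kernel is the ideal generated by `e₁`. -/
def sHom : BModel k x y →+* k where
  toFun := s
  map_one' := rfl
  map_mul' _ _ := rfl
  map_zero' := rfl
  map_add' _ _ := rfl

/-- For `z` in the ideal generated by `e₁`, the element `w` of `e₁B` such that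
`αₚ * w` is the part of `z` lying in `αₚ B`. -/
def comp (p : Fin x) (z : BModel k x y) : BModel k x y := ⟨z.u p, 0, 0, z.m p, 0⟩

/-- The decomposition `B e₁ B = e₁B ⊕ ⨁ₚ αₚB`. -/
lemma decomp (z : BModel k x y) (hz : z.s = 0) :
    e1 k x y * z + ∑ p, a p * comp p z = z := by
  ext <;> simp [e1, a, comp, hz, Pi.single_apply]

/-- On the ideal generated by `e₁`, the components are right linear. -/
lemma comp_mul (p : Fin x) (z w : BModel k x y) (hz : z.s = 0) :
    comp p (z * w) = comp p z * w := by
  ext <;> simp [comp, hz]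

lemma comp_add (p : Fin x) (z w : BModel k x y) : comp p (z + w) = comp p z + comp p w := by
  ext <;> simp [comp]

end BModel

/-! ### The isomorphism of `B(x,y)` with the model -/

section Presentation

variable {k x y}

variable (k x y) in
/-- The quotient map from the free algebra onto `B(x,y)`. -/
def mkB : FreeAlgebra k (BGen x y) →ₐ[k] BAlgebra k x y := RingQuot.mkAlgHom k (BRel k x y)

/-- The algebra map from `B(x,y)` to the model. -/
def toModel : BAlgebra k x y →ₐ[k] BModel k x y :=
  RingQuot.liftAlgHom k ⟨FreeAlgebra.lift k BModel.gen, by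
    intro z w h
    cases h <;>
      simp only [map_mul, map_add, map_one, map_zero, FreeAlgebra.lift_ι_apply, BModel.gen] <;>
      ext <;> simp [BModel.e1, BModel.a]⟩

lemma toModel_mkB (w : FreeAlgebra k (BGen x y)) :
    toModel (mkB k x y w) = FreeAlgebra.lift k BModel.gen w :=
  RingQuot.liftAlgHom_mkAlgHom_apply ..

lemma brel {z w : FreeAlgebra k (BGen x y)} (h : BRel k x y z w) : mkB k x y z = mkB k x y w :=
  RingQuot.mkAlgHom_rel k h

lemma e11 : Be1 k x y * Be1 k x y = Be1 k x y := (map_mul (mkB k x y) _ _).symm.trans (brel .idem1)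
lemma e22 : Be2 k x y * Be2 k x y = Be2 k x y := (map_mul (mkB k x y) _ _).symm.trans (brel .idem2)
lemma e12 : Be1 k x y * Be2 k x y = 0 := (map_mul (mkB k x y) _ _).symm.trans ((brel .orth12).trans (map_zero _))
lemma e21 : Be2 k x y * Be1 k x y = 0 := (map_mul (mkB k x y) _ _).symm.trans ((brel .orth21).trans (map_zero _))
lemma e_sum : Be1 k x y + Be2 k x y = 1 :=
  (map_add (mkB k x y) _ _).symm.trans
    ((brel .sum).trans (map_one _))
lemma e2a (p : Fin x) : Be2 k x y * Ba k x y p = Ba k x y p :=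
  (map_mul (mkB k x y) _ _).symm.trans (brel (.a_tgt p))
lemma ae1 (p : Fin x) : Ba k x y p * Be1 k x y = Ba k x y p :=
  (map_mul (mkB k x y) _ _).symm.trans (brel (.a_src p))
lemma e1b (q : Fin y) : Be1 k x y * Bb k x y q = Bb k x y q :=
  (map_mul (mkB k x y) _ _).symm.trans (brel (.b_tgt q))
lemma be2 (q : Fin y) : Bb k x y q * Be2 k x y = Bb k x y q :=
  (map_mul (mkB k x y) _ _).symm.trans (brel (.b_src q))
lemma b_mul_a (p : Fin x) (q : Fin y) : Bb k x y q * Ba k x y p = 0 :=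
  (map_mul (mkB k x y) _ _).symm.trans ((brel (.ba p q)).trans (map_zero _))

lemma e1a (p : Fin x) : Be1 k x y * Ba k x y p = 0 := by
  rw [← e2a, ← mul_assoc, e12, zero_mul]
lemma ae2 (p : Fin x) : Ba k x y p * Be2 k x y = 0 := by
  rw [← ae1, mul_assoc, e12, mul_zero]
lemma e2b (q : Fin y) : Be2 k x y * Bb k x y q = 0 := by
  rw [← e1b, ← mul_assoc, e21, zero_mul]
lemma b_e1 (q : Fin y) : Bb k x y q * Be1 k x y = 0 := by
  rw [← be2, mul_assoc, e21, mul_zero]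
lemma a_mul_a (p p' : Fin x) : Ba k x y p * Ba k x y p' = 0 := by
  rw [← ae1, mul_assoc, e1a, mul_zero]
lemma b_mul_b (q q' : Fin y) : Bb k x y q * Bb k x y q' = 0 := by
  rw [← be2, mul_assoc, e2b, mul_zero]

/-- The linear map evaluating coordinates with respect to the paths of `B(x,y)`. -/
def ofModel : BModel k x y →ₗ[k] BAlgebra k x y where
  toFun t := t.r • Be1 k x y + t.s • Be2 k x y + ∑ p, t.u p • Ba k x y p +
    ∑ q, t.v q • Bb k x y q + ∑ p, ∑ q, t.m p q • (Ba k x y p * Bb k x y q)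
  map_add' t t' := by
    simp only [BModel.add_r, BModel.add_s, BModel.add_u, BModel.add_v, BModel.add_m, Pi.add_apply,
      add_smul, Finset.sum_add_distrib]
    abel
  map_smul' c t := by
    simp [mul_smul, Finset.smul_sum]

lemma ofModel_apply (t : BModel k x y) :
    ofModel t = t.r • Be1 k x y + t.s • Be2 k x y + ∑ p, t.u p • Ba k x y p +
      ∑ q, t.v q • Bb k x y q + ∑ p, ∑ q, t.m p q • (Ba k x y p * Bb k x y q) := rfl

lemma ofModel_gen_mul (g : BGen x y) (t : BModel k x y) :
    ofModel (BModel.gen g * t) =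
      mkB k x y (FreeAlgebra.ι k g) * ofModel t := by
  cases g with
  | e1 =>
    rw [show mkB k x y _ = Be1 k x y from rfl]
    simp [ofModel_apply, BModel.gen, BModel.e1, mul_add, Finset.mul_sum, e11, e12, e1a, e1b,
      ← mul_assoc]
  | e2 =>
    rw [show mkB k x y _ = Be2 k x y from rfl]
    simp [ofModel_apply, BModel.gen, mul_add, Finset.mul_sum, e21, e22, e2a, e2b, ← mul_assoc]
  | a p =>
    rw [show mkB k x y _ = Ba k x y p from rfl]
    simp [ofModel_apply, BModel.gen, BModel.a, mul_add, Finset.mul_sum, ae1, ae2, a_mul_a,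
      ← mul_assoc, Pi.single_apply, ite_smul, Finset.sum_ite_eq']
  | b q =>
    rw [show mkB k x y _ = Bb k x y q from rfl]
    simp [ofModel_apply, BModel.gen, mul_add, Finset.mul_sum, b_e1, be2, b_mul_a, b_mul_b,
      ← mul_assoc, Pi.single_apply, ite_smul]

lemma ofModel_toModel_mul (w : BAlgebra k x y) (t : BModel k x y) :
    ofModel (toModel w * t) = w * ofModel t := by
  obtain ⟨w, rfl⟩ : ∃ w', mkB k x y w' = w := RingQuot.mkAlgHom_surjective k (BRel k x y) w
  induction w using FreeAlgebra.induction generalizing t with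
  | grade0 c =>
    rw [AlgHom.commutes, AlgHom.commutes, ← Algebra.smul_def, ← Algebra.smul_def, map_smul]
  | grade1 g => rw [toModel_mkB, FreeAlgebra.lift_ι_apply, ofModel_gen_mul]
  | mul z w hz hw => rw [map_mul (mkB k x y), map_mul toModel, mul_assoc, hz, hw, mul_assoc]
  | add z w hz hw => rw [map_add, map_add, add_mul, map_add, hz, hw, add_mul]

lemma ofModel_toModel (w : BAlgebra k x y) : ofModel (toModel w) = w := by
  have h1 : ofModel (1 : BModel k x y) = 1 := by simp [ofModel_apply, e_sum]
  simpa [h1] using ofModel_toModel_mul w 1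

lemma toModel_ofModel (t : BModel k x y) : toModel (ofModel t) = t := by
  have h (g : BGen x y) : toModel (mkB k x y (FreeAlgebra.ι k g)) = BModel.gen g := by
    rw [toModel_mkB, FreeAlgebra.lift_ι_apply]
  have h1 : toModel (Be1 k x y) = BModel.gen .e1 := h _
  have h2 : toModel (Be2 k x y) = BModel.gen .e2 := h _
  have h3 (p) : toModel (Ba k x y p) = BModel.gen (.a p) := h _
  have h4 (q) : toModel (Bb k x y q) = BModel.gen (.b q) := h _
  simp only [ofModel_apply, map_add, map_sum, map_smul, map_mul, h1, h2, h3, h4]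
  ext <;> simp [BModel.gen, BModel.e1, BModel.a, Pi.single_apply]

variable (k x y) in
/-- `B(x,y)` is isomorphic to its coordinate model. -/
def modelEquiv : BAlgebra k x y ≃+* BModel k x y :=
  { toModel (k := k) (x := x) (y := y) with
    invFun := ofModel
    left_inv := ofModel_toModel
    right_inv := toModel_ofModel }

lemma modelEquiv_e1 : modelEquiv k x y (Be1 k x y) = BModel.e1 k x y := by
  change toModel (mkB k x y (FreeAlgebra.ι k .e1)) = _
  rw [toModel_mkB, FreeAlgebra.lift_ι_apply, BModel.gen]

end Presentation

/-! ### Heredity properties of rings isomorphic to the model -/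

section Transport

variable {k x y}
variable {A : Type} [Ring A] (φ : A ≃+* BModel k x y) {e : A}

lemma idem_of_model (hφ : φ e = BModel.e1 k x y) : IsIdempotentElem e := by
  apply φ.injective
  rw [map_mul, hφ]
  ext <;> simp [BModel.e1]

/-- The ideal generated by `e₁` consists of the elements with vanishing `e₂`-coefficient. -/
lemma mem_span_iff_model (hφ : φ e = BModel.e1 k x y) (z : A) :
    z ∈ (TwoSidedIdeal.span {e} : TwoSidedIdeal A) ↔ (φ z).s = 0 := by
  constructor
  · intro h
    have hle : TwoSidedIdeal.span {e} ≤
        TwoSidedIdeal.ker ((BModel.sHom k x y).comp φ.toRingHom) := by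
      rw [TwoSidedIdeal.span_le, Set.singleton_subset_iff, SetLike.mem_coe,
        TwoSidedIdeal.mem_ker]
      change (φ e).s = 0
      rw [hφ]
      rfl
    exact (TwoSidedIdeal.mem_ker _).1 (hle h)
  · intro h
    have he : e ∈ (TwoSidedIdeal.span {e} : TwoSidedIdeal A) :=
      TwoSidedIdeal.subset_span rfl
    have hz : z = e * z + ∑ p, φ.symm (BModel.a p) * e * φ.symm (BModel.comp p (φ z)) := by
      apply φ.injective
      conv_lhs => rw [← BModel.decomp (φ z) h]
      simp only [map_add, map_mul, map_sum, hφ, RingEquiv.apply_symm_apply]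
      congr 1
      refine Finset.sum_congr rfl fun p _ => ?_
      congr 1
      ext <;> simp [BModel.a, BModel.e1]
    rw [hz]
    refine add_mem (TwoSidedIdeal.mul_mem_right _ _ _ he) (sum_mem fun p _ => ?_)
    exact TwoSidedIdeal.mul_mem_right _ _ _ (TwoSidedIdeal.mul_mem_left _ _ _ he)

/-- The quotient by the ideal generated by `e₁` is `k`, through the `e₂`-coefficient. -/
lemma quotient_model (hφ : φ e = BModel.e1 k x y) :
    Nonempty ((TwoSidedIdeal.span {e} : TwoSidedIdeal A).ringCon.Quotient ≃+* k) := by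
  have h : (TwoSidedIdeal.span {e} : TwoSidedIdeal A).ringCon =
      RingCon.ker ((BModel.sHom k x y).comp φ.toRingHom) := by
    ext z w
    rw [TwoSidedIdeal.rel_iff, mem_span_iff_model φ hφ, RingCon.ker_apply, map_sub,
      sub_eq_add_neg]
    exact add_neg_eq_zero
  rw [h]
  refine ⟨RingCon.quotientKerEquivOfSurjective _ fun c => ⟨φ.symm ⟨0, c, 0, 0, 0⟩, ?_⟩⟩
  change (φ (φ.symm _)).s = c
  rw [RingEquiv.apply_symm_apply]

/-- The corner at `e₁` is `k`, through the `e₁`-coefficient. -/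
lemma corner_model (hφ : φ e = BModel.e1 k x y) (he : IsIdempotentElem e) :
    letI := cornerRing he
    Nonempty (cornerNonUnitalSubring e ≃+* k) := by
  refine ⟨{ toFun := fun z => (φ z.1).r
            invFun := fun c => ⟨φ.symm ⟨c, 0, 0, 0, 0⟩, ?_, ?_⟩
            left_inv := ?_
            right_inv := ?_
            map_mul' := ?_
            map_add' := ?_ }⟩
  · apply φ.injective
    rw [map_mul, hφ, RingEquiv.apply_symm_apply]
    ext <;> simp [BModel.e1]
  · apply φ.injective
    rw [map_mul, hφ, RingEquiv.apply_symm_apply]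
    ext <;> simp [BModel.e1]
  · rintro ⟨z, h1, h2⟩
    apply Subtype.ext
    apply φ.injective
    change φ (φ.symm _) = φ z
    rw [RingEquiv.apply_symm_apply]
    -- `z = e₁ z e₁` has only an `e₁`-coefficient because all `β_q αₚ` vanish
    have h : φ z = BModel.e1 k x y * φ z * BModel.e1 k x y := by
      rw [← hφ, ← map_mul, ← map_mul, h1, h2]
    change (⟨(φ z).r, 0, 0, 0, 0⟩ : BModel k x y) = φ z
    rw [h]
    ext <;> simp [BModel.e1]
  · intro c
    change (φ (φ.symm _)).r = c
    rw [RingEquiv.apply_symm_apply]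
  · intro z w
    change (φ (z.1 * w.1)).r = _
    rw [map_mul]
    rfl
  · intro z w
    change (φ (z.1 + w.1)).r = _
    rw [map_add]
    rfl

/-- `AeA` is a direct summand of the free right module `A ⊕ A^x`: the inclusion takes the
components of an element in the decomposition `e₁A ⊕ ⨁ₚ αₚA`, and the retraction multiplies them by
`e₁` and the `αₚ` and adds up. -/
lemma projective_model (hφ : φ e = BModel.e1 k x y) :
    Module.Projective Aᵐᵒᵖ (TwoSidedIdeal.span {e} : TwoSidedIdeal A).rightSubmodule := by
  have hmem : ∀ z : A, z ∈ (TwoSidedIdeal.span {e} : TwoSidedIdeal A).rightSubmodule ↔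
      (φ z).s = 0 := mem_span_iff_model φ hφ
  let i : (TwoSidedIdeal.span {e} : TwoSidedIdeal A).rightSubmodule →ₗ[Aᵐᵒᵖ]
      Aᵐᵒᵖ × (Fin x → Aᵐᵒᵖ) :=
    { toFun := fun z => (MulOpposite.op (e * z.1),
        fun p => MulOpposite.op (φ.symm (BModel.comp p (φ z.1))))
      map_add' := by
        intro z w
        ext <;> simp [mul_add, BModel.comp_add]
      map_smul' := by
        rintro c ⟨z, hz⟩
        refine Prod.ext ?_ (funext fun p => ?_)
        · simp [MulOpposite.smul_eq_mul_unop, mul_assoc]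
        · have := BModel.comp_mul p (φ z) (φ c.unop) ((hmem z).1 hz)
          simp [MulOpposite.smul_eq_mul_unop, this] }
  let s : Aᵐᵒᵖ × (Fin x → Aᵐᵒᵖ) →ₗ[Aᵐᵒᵖ]
      (TwoSidedIdeal.span {e} : TwoSidedIdeal A).rightSubmodule :=
    { toFun := fun w => ⟨e * w.1.unop + ∑ p, φ.symm (BModel.a p) * (w.2 p).unop, by
        rw [hmem]
        simp [hφ, BModel.e1, BModel.a]⟩
      map_add' := by
        intro z w
        apply Subtype.ext
        simp [mul_add, Finset.sum_add_distrib]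
        abel
      map_smul' := by
        intro c z
        apply Subtype.ext
        simp [MulOpposite.smul_eq_mul_unop, mul_assoc, Finset.sum_mul] }
  refine Module.Projective.of_split i s (LinearMap.ext ?_)
  rintro ⟨z, hz⟩
  apply Subtype.ext
  apply φ.injective
  change φ (e * (e * z) + ∑ p, φ.symm (BModel.a p) * φ.symm (BModel.comp p (φ z))) = φ z
  rw [← mul_assoc, idem_of_model φ hφ]
  simpa [hφ] using BModel.decomp (φ z) ((hmem z).1 hz)

lemma corner_semisimple_model (hφ : φ e = BModel.e1 k x y) (he : IsIdempotentElem e) :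
    letI := cornerRing he
    IsSemisimpleRing (cornerNonUnitalSubring e) := by
  let := cornerRing he
  obtain ⟨f⟩ := corner_model φ hφ he
  exact f.symm.isSemisimpleRing

lemma heredity_model (hφ : φ e = BModel.e1 k x y) :
    IsHeredityIdeal (TwoSidedIdeal.span {e} : TwoSidedIdeal A) :=
  ⟨e, idem_of_model φ hφ, rfl, corner_semisimple_model φ hφ _, projective_model φ hφ⟩

end Transport

/-- A semisimple ring is a heredity ideal of itself, generated by the idempotent `1`. -/
lemma heredity_top {R : Type} [Ring R] [IsSemisimpleRing R] :
    IsHeredityIdeal (⊤ : TwoSidedIdeal R) := by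
  refine ⟨1, IsIdempotentElem.one, ?_, ?_, Module.projective_of_isSemisimpleRing _ _⟩
  · refine (eq_top_iff.2 fun z _ => ?_).symm
    have h1 : (1 : R) ∈ (TwoSidedIdeal.span {1} : TwoSidedIdeal R) :=
      TwoSidedIdeal.subset_span rfl
    simpa using TwoSidedIdeal.mul_mem_left _ z _ h1
  · let := cornerRing (IsIdempotentElem.one (M := R))
    let f : R ≃+* cornerNonUnitalSubring (1 : R) :=
      { toFun := fun z => ⟨z, one_mul z, mul_one z⟩
        invFun := fun z => z.1
        left_inv := fun _ => rfl
        right_inv := fun _ => rfl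
        map_mul' := fun _ _ => rfl
        map_add' := fun _ _ => rfl }
    exact f.isSemisimpleRing

/-- A ring is its own quotient by the zero ideal. -/
def quotientBot (R : Type) [Ring R] : R ≃+* (⊥ : TwoSidedIdeal R).ringCon.Quotient :=
  RingEquiv.ofBijective (⊥ : TwoSidedIdeal R).ringCon.mk'
    ⟨(TwoSidedIdeal.ker_eq_bot _).1 (TwoSidedIdeal.ker_ringCon_mk' _), RingCon.mk'_surjective _⟩

/-- Images of ideals under a surjection, computed on generators. -/
lemma span_image_span {R S : Type} [Ring R] [Ring S] (f : R →+* S) (e : R) :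
    TwoSidedIdeal.span (f '' (TwoSidedIdeal.span {e} : TwoSidedIdeal R)) =
      TwoSidedIdeal.span {f e} := by
  apply le_antisymm
  · rw [TwoSidedIdeal.span_le]
    rintro _ ⟨z, hz, rfl⟩
    have h : TwoSidedIdeal.span {e} ≤ (TwoSidedIdeal.span {f e}).comap f := by
      rw [TwoSidedIdeal.span_le, Set.singleton_subset_iff]
      exact (TwoSidedIdeal.mem_comap _).2 (TwoSidedIdeal.subset_span rfl)
    exact (TwoSidedIdeal.mem_comap _).1 (h hz)
  · apply TwoSidedIdeal.span_mono
    rintro _ rfl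
    exact ⟨e, TwoSidedIdeal.subset_span rfl, rfl⟩

lemma quasiHereditary_of_model {k : Type} [Field k] {x y : ℕ} {A : Type} [Ring A]
    (φ : A ≃+* BModel k x y) {e : A} (hφ : φ e = BModel.e1 k x y) : IsQuasiHereditary A := by
  refine ⟨2, ![⊥, TwoSidedIdeal.span {e}, ⊤], ?_, rfl, rfl, fun i => ?_⟩
  · rw [Fin.monotone_iff_le_succ]
    intro i
    fin_cases i
    · exact bot_le
    · exact le_top
  · fin_cases i
    · change IsHeredityIdeal (TwoSidedIdeal.span
        ((⊥ : TwoSidedIdeal A).ringCon.mk' '' (TwoSidedIdeal.span {e} : TwoSidedIdeal A)))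
      rw [span_image_span]
      refine heredity_model ((quotientBot A).symm.trans φ) ?_
      change φ ((quotientBot A).symm (quotientBot A e)) = _
      rw [RingEquiv.symm_apply_apply, hφ]
    · change IsHeredityIdeal (TwoSidedIdeal.span
        ((TwoSidedIdeal.span {e} : TwoSidedIdeal A).ringCon.mk' '' (⊤ : TwoSidedIdeal A)))
      obtain ⟨f⟩ := quotient_model φ hφ
      have := f.symm.isSemisimpleRing
      convert heredity_top (R := (TwoSidedIdeal.span {e} : TwoSidedIdeal A).ringCon.Quotient)
      refine eq_top_iff.2 fun z _ => ?_
      obtain ⟨w, rfl⟩ := RingCon.mk'_surjective _ z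
      exact TwoSidedIdeal.subset_span ⟨w, trivial, rfl⟩

/-- `0 ⊆ Be₁B ⊆ B` is a heredity chain for `B = B(x,y)`, and `B(x,y)`
is quasi-hereditary. -/
theorem BAlgebra_heredity_chain :
    IsIdempotentElem (Be1 k x y) ∧
    (∀ he : IsIdempotentElem (Be1 k x y),
      letI := cornerRing he
      IsSemisimpleRing (cornerNonUnitalSubring (Be1 k x y)) ∧
        Nonempty (cornerNonUnitalSubring (Be1 k x y) ≃+* k)) ∧
    Module.Projective (BAlgebra k x y)ᵐᵒᵖ
      (TwoSidedIdeal.span {Be1 k x y} : TwoSidedIdeal (BAlgebra k x y)).rightSubmodule ∧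
    IsSemisimpleRing (TwoSidedIdeal.span {Be1 k x y} :
      TwoSidedIdeal (BAlgebra k x y)).ringCon.Quotient ∧
    Nonempty ((TwoSidedIdeal.span {Be1 k x y} :
      TwoSidedIdeal (BAlgebra k x y)).ringCon.Quotient ≃+* k) ∧
    IsQuasiHereditary (BAlgebra k x y) := by
  have hφ := modelEquiv_e1 (k := k) (x := x) (y := y)
  refine ⟨idem_of_model _ hφ,
    fun he => ⟨corner_semisimple_model _ hφ he, corner_model _ hφ he⟩,
    projective_model _ hφ, ?_, quotient_model _ hφ, quasiHereditary_of_model _ hφ⟩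
  obtain ⟨f⟩ := quotient_model _ hφ
  exact f.symm.isSemisimpleRing

end
end
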